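/- Let U ⊆ ℂⁿ be open, let f : U → ℂ be holomorphic, and let z₀ ∈ U be a point such that f does not vanish identically on any neighborhood of z₀. Then there exists an open neighborhood V of z₀ with V ⊆ U such that the (2n−2)-dimensional Hausdorff measure of the zero set {z ∈ V : f(z) = 0} is finite. In particular, the complex hypersurface Z_f = f^{−1}(0) has locally finite (2n−2)-dimensional volume near each of its points, including the singular points of Z_f. -/

import Mathlib

open MeasureTheory
open scoped MeasureTheory

noncomputable instance euclideanSpaceComplexMeasurableSpace (n : ℕ) :
    MeasurableSpace (EuclideanSpace ℂ (Fin n)) := borel _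

instance euclideanSpaceComplexBorelSpace (n : ℕ) :
    BorelSpace (EuclideanSpace ℂ (Fin n)) := ⟨rfl⟩

section Aux
open MeasureTheory Metric Set Filter Topology

theorem zeros_bound (R : ℝ) (hR : 0 < R) (S : Finset ℂ) : ∀ (h : ℂ → ℂ) (M : ℝ),
    DiffContOnCl ℂ h (ball 0 R) → (∀ z ∈ sphere (0:ℂ) R, ‖h z‖ ≤ M) →
    (∀ a ∈ S, ‖a‖ < R / 3) → (∀ a ∈ S, h a = 0) → ‖h 0‖ * 2 ^ S.card ≤ M := by
  induction S using Finset.induction_on with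
  | empty =>
    intro h M hd hM _ _
    simp only [Finset.card_empty, pow_zero, mul_one]
    refine Complex.norm_le_of_forall_mem_frontier_norm_le isBounded_ball hd ?_
      (subset_closure (mem_ball_self hR))
    rw [frontier_ball _ hR.ne']
    exact hM
  | insert a S ha ih =>
    intro h M hd hM hS h0
    have haR := hS a (Finset.mem_insert_self _ _)
    have haball : a ∈ ball (0:ℂ) R := by
      rw [mem_ball_zero_iff]; linarith
    have hmul : ∀ z, (z - a) * dslope h a z = h z := by
      intro z
      have := sub_smul_dslope h a z
      rwa [h0 a (Finset.mem_insert_self _ _), sub_zero, smul_eq_mul] at this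
    have hd' : DiffContOnCl ℂ (dslope h a) (ball 0 R) := by
      refine ⟨(Complex.differentiableOn_dslope (isOpen_ball.mem_nhds haball)).2 hd.1, ?_⟩
      exact (continuousOn_dslope (mem_of_superset (isOpen_ball.mem_nhds haball) subset_closure)).2
        ⟨hd.2, hd.1.differentiableAt (isOpen_ball.mem_nhds haball)⟩
    have hM' : ∀ z ∈ sphere (0:ℂ) R, ‖dslope h a z‖ ≤ M / (2 * R / 3) := by
      intro z hz
      have hz' : ‖z‖ = R := by simpa using hz
      have h1 : 2 * R / 3 ≤ ‖z - a‖ := by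
        have := norm_sub_norm_le z a
        linarith
      rw [le_div_iff₀ (by positivity), mul_comm]
      calc _ ≤ ‖z - a‖ * ‖dslope h a z‖ := by gcongr
        _ = ‖h z‖ := by rw [← norm_mul, hmul]
        _ ≤ M := hM z hz
    have := ih (dslope h a) _ hd' hM' (fun b hb => hS b (Finset.mem_insert_of_mem hb)) (by
      intro b hb
      have h1 := hmul b
      rw [h0 b (Finset.mem_insert_of_mem hb)] at h1
      rcases mul_eq_zero.1 h1 with h2 | h2
      · exact absurd (sub_eq_zero.1 h2 ▸ hb) ha
      · exact h2)
    rw [Finset.card_insert_of_notMem ha, ← hmul 0, norm_mul, zero_sub, norm_neg, pow_succ]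
    rw [le_div_iff₀ (by positivity)] at this
    have h3 : ‖a‖ * (‖dslope h a 0‖ * 2 ^ S.card) ≤ R / 3 * (‖dslope h a 0‖ * 2 ^ S.card) := by
      gcongr
    nlinarith

variable {E : Type*} [NormedAddCommGroup E] [NormedSpace ℂ E]

theorem diff_line {f : E → ℂ} {U : Set E} (hU : IsOpen U) (hf : DifferentiableOn ℂ f U)
    (z v : E) : DifferentiableOn ℂ (fun t : ℂ => f (z + t • v)) {t | z + t • v ∈ U} := by
  intro t ht
  refine DifferentiableAt.differentiableWithinAt ?_
  exact DifferentiableAt.comp t (hf.differentiableAt (hU.mem_nhds ht)) (by fun_prop)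

theorem deriv_line {f : E → ℂ} (z v : E) (t : ℂ) (hf : DifferentiableAt ℂ f (z + t • v)) :
    deriv (fun t : ℂ => f (z + t • v)) t = fderiv ℂ f (z + t • v) v := by
  have h1 : HasDerivAt (fun t : ℂ => z + t • v) v t := by
    simpa using ((hasDerivAt_id t).smul_const v).const_add z
  exact (hf.hasFDerivAt.comp_hasDerivAt t h1).deriv

theorem differentiableOn_fderiv_apply [FiniteDimensional ℂ E]
    {f : E → ℂ} {U : Set E} (hU : IsOpen U) (hf : DifferentiableOn ℂ f U) (v : E) :
    DifferentiableOn ℂ (fun z => fderiv ℂ f z v) U := by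
  let _ : MeasurableSpace E := borel E
  have _ : BorelSpace E := ⟨rfl⟩
  intro z₀ hz₀
  refine DifferentiableAt.differentiableWithinAt ?_
  obtain ⟨ρ, hρ, hball⟩ : ∃ ρ > 0, ∀ z ∈ ball z₀ ρ, z ∈ U ∧ dist (f z) (f z₀) < 1 := by
    have h1 := (hf.differentiableAt (hU.mem_nhds hz₀)).continuousAt
    have h2 : ∀ᶠ z in 𝓝 z₀, z ∈ U ∧ dist (f z) (f z₀) < 1 :=
      Filter.Eventually.and (hU.mem_nhds hz₀) (h1.eventually (ball_mem_nhds _ one_pos))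
    exact Metric.eventually_nhds_iff_ball.1 h2
  -- Cauchy estimate
  have hC : ∀ z ∈ ball z₀ (ρ / 2), ‖fderiv ℂ f z‖ ≤ 2 / (ρ / 2) := by
    intro z hz
    have hsub : ball z (ρ / 2) ⊆ ball z₀ ρ := ball_subset_ball' (by
      rw [mem_ball] at hz; linarith)
    refine Complex.norm_fderiv_le_div_of_mapsTo_ball (hf.mono fun w hw => (hball w (hsub hw)).1) ?_
      (by positivity)
    intro w hw
    have h1 := (hball w (hsub hw)).2
    have h2 := (hball z (hsub (mem_ball_self (by positivity)))).2
    rw [mem_closedBall]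
    have := dist_triangle_right (f w) (f z) (f z₀)
    linarith
  obtain ⟨r, hr, hrv⟩ : ∃ r > 0, r * ‖v‖ < ρ / 4 := by
    refine ⟨ρ / (8 * (‖v‖ + 1)), by positivity, ?_⟩
    rw [div_mul_eq_mul_div, div_lt_iff₀ (by positivity)]
    nlinarith [norm_nonneg v]
  have hmem : ∀ z ∈ ball z₀ (ρ / 4), ∀ t : ℂ, ‖t‖ ≤ r → z + t • v ∈ ball z₀ (ρ / 2) := by
    intro z hz t ht
    rw [mem_ball, dist_eq_norm] at *
    have : ‖t • v‖ ≤ r * ‖v‖ := by rw [norm_smul]; gcongr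
    calc _ = ‖(z - z₀) + t • v‖ := by congr 1; abel
      _ ≤ _ := norm_add_le _ _
      _ < _ := by linarith
  have hmemU : ∀ z ∈ ball z₀ (ρ / 4), ∀ t : ℂ, ‖t‖ ≤ r → z + t • v ∈ U := fun z hz t ht =>
    (hball _ (ball_subset_ball (by linarith) (hmem z hz t ht))).1
  have hformula : (fun z => fderiv ℂ f z v) =ᶠ[𝓝 z₀] fun z =>
      (2 * Real.pi * Complex.I : ℂ)⁻¹ • ∮ t in C(0, r), ((t - 0) ^ 2)⁻¹ • f (z + t • v) := by
    filter_upwards [ball_mem_nhds z₀ (show 0 < ρ / 4 by positivity)] with z hz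
    have h1 := Complex.two_pi_I_inv_smul_circleIntegral_sub_sq_inv_smul_of_differentiable
      (E := ℂ) (U := {t : ℂ | z + t • v ∈ U}) (c := 0) (w₀ := 0) (R := r)
      (f := fun t : ℂ => f (z + t • v))
      (hU.preimage (by fun_prop)) (fun t ht => hmemU z hz t (by simpa using ht))
      (diff_line hU hf z v) (by simpa using hr)
    rw [h1, deriv_line]
    · simp
    · refine hf.differentiableAt (hU.mem_nhds (hmemU z hz 0 (by simpa using hr.le)))
  refine DifferentiableAt.congr_of_eventuallyEq ?_ hformula
  suffices h : DifferentiableAt ℂ (fun z => ∮ t in C(0, r), ((t - 0) ^ 2)⁻¹ • f (z + t • v)) z₀ from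
    h.const_smul (2 * Real.pi * Complex.I : ℂ)⁻¹
  simp only [circleIntegral]
  have hcm : ∀ θ : ℝ, ‖circleMap 0 r θ‖ ≤ r := by intro θ; simp [abs_of_pos hr]
  have hc0 : ∀ θ : ℝ, circleMap 0 r θ ≠ 0 := fun θ => circleMap_ne_center hr.ne'
  have hcont' : Continuous fun θ : ℝ => deriv (circleMap 0 r) θ * ((circleMap 0 r θ - 0) ^ 2)⁻¹ := by
    simp only [deriv_circleMap, sub_zero]
    refine Continuous.mul (by fun_prop) (Continuous.inv₀ (by fun_prop) fun θ => pow_ne_zero _ (hc0 θ))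
  have hcont : ∀ z ∈ ball z₀ (ρ / 4), Continuous fun θ : ℝ => deriv (circleMap 0 r) θ •
      ((circleMap 0 r θ - 0) ^ 2)⁻¹ • f (z + circleMap 0 r θ • v) := by
    intro z hz
    simp only [smul_smul]
    refine hcont'.smul ?_
    exact hf.continuousOn.comp_continuous (by fun_prop) fun θ => hmemU z hz _ (hcm θ)
  have key := intervalIntegral.hasFDerivAt_integral_of_dominated_of_fderiv_le (𝕜 := ℂ)
    (μ := volume) (a := 0) (b := 2 * Real.pi)
    (F := fun (z : E) (θ : ℝ) => deriv (circleMap 0 r) θ •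
      ((circleMap 0 r θ - 0) ^ 2)⁻¹ • f (z + circleMap 0 r θ • v))
    (F' := fun (z : E) (θ : ℝ) => deriv (circleMap 0 r) θ •
      ((circleMap 0 r θ - 0) ^ 2)⁻¹ • fderiv ℂ f (z + circleMap 0 r θ • v))
    (x₀ := z₀) (s := ball z₀ (ρ / 4)) (bound := fun _ => r * ((r ^ 2)⁻¹ * (2 / (ρ / 2))))
    (ball_mem_nhds _ (by positivity)) ?_ ?_ ?_ ?_ ?_ ?_
  · exact key.differentiableAt
  · filter_upwards [ball_mem_nhds z₀ (show 0 < ρ / 4 by positivity)] with z hz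
    exact (hcont z hz).aestronglyMeasurable
  · exact (hcont z₀ (mem_ball_self (by positivity))).intervalIntegrable _ _
  · refine Measurable.aestronglyMeasurable ?_
    simp only [smul_smul]
    refine Measurable.smul hcont'.measurable ?_
    exact (measurable_fderiv ℂ f).comp (Continuous.measurable (by fun_prop))
  · refine ae_of_all _ fun θ _ z hz => ?_
    rw [norm_smul, norm_smul]
    simp only [deriv_circleMap, norm_mul, norm_inv, norm_pow, sub_zero, norm_circleMap_zero, Complex.norm_I, mul_one, abs_of_pos hr]
    gcongr
    exact hC _ (hmem z hz _ (hcm θ))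
  · exact intervalIntegrable_const
  · refine ae_of_all _ fun θ _ z hz => ?_
    have h1 : HasFDerivAt (fun z => f (z + circleMap 0 r θ • v))
        (fderiv ℂ f (z + circleMap 0 r θ • v)) z :=
      (hf.differentiableAt (hU.mem_nhds (hmemU z hz _ (hcm θ)))).hasFDerivAt.comp z
        ((hasFDerivAt_id z).add_const _)
    exact (h1.const_smul ((circleMap 0 r θ - 0) ^ 2)⁻¹).const_smul (deriv (circleMap 0 r) θ)

theorem strict_of_differentiableOn [FiniteDimensional ℂ E]
    {f : E → ℂ} {U : Set E} (hU : IsOpen U) (hf : DifferentiableOn ℂ f U) {z : E} (hz : z ∈ U) :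
    HasStrictFDerivAt f (fderiv ℂ f z) z := by
  refine hasStrictFDerivAt_of_hasFDerivAt_of_continuousAt ?_ ?_
  · filter_upwards [hU.mem_nhds hz] with y hy
    exact (hf.differentiableAt (hU.mem_nhds hy)).hasFDerivAt
  · rw [continuousAt_clm_apply]
    intro v
    exact ((differentiableOn_fderiv_apply hU hf v).differentiableAt (hU.mem_nhds hz)).continuousAt

theorem hausdorff_finite_of_cover {X : Type*} [MetricSpace X] [PolishSpace X]
    [MeasurableSpace X] [BorelSpace X] (m : ℕ) (p : X → (Fin m → ℝ)) (hp : Continuous p)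
    (A : Set X) (hA : MeasurableSet A) (C : NNReal)
    (hloc : ∀ z ∈ A, ∃ W ∈ 𝓝 z, ∀ x ∈ W ∩ A, ∀ y ∈ W ∩ A, dist x y ≤ C * dist (p x) (p y))
    (N : ℕ) (hN : ∀ S : Finset X, (S : Set X) ⊆ A → (∀ x ∈ S, ∀ y ∈ S, p x = p y) → S.card ≤ N)
    (hbd : Bornology.IsBounded (p '' A)) : μH[(m : ℝ)] A < ⊤ := by
  classical
  rcases A.eq_empty_or_nonempty with rfl | hne
  · simp
  have _ : Nonempty X := ⟨hne.some⟩
  choose! W hW hWl using hloc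
  obtain ⟨t, htA, htc, hcov⟩ := TopologicalSpace.countable_cover_nhdsWithin
    (f := fun z => interior (W z)) (s := A)
    (fun x hx => mem_nhdsWithin_of_mem_nhds (interior_mem_nhds.2 (hW x hx)))
  have htne : t.Nonempty := by
    rcases hne with ⟨a, ha⟩
    obtain ⟨x, hx, _⟩ := mem_iUnion₂.1 (hcov ha)
    exact ⟨x, hx⟩
  obtain ⟨u, rfl⟩ := htc.exists_eq_range htne
  set D : ℕ → Set X := fun k => A ∩ interior (W (u k)) with hD
  have hDm : ∀ k, MeasurableSet (D k) := fun k => hA.inter isOpen_interior.measurableSet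
  set B := disjointed D with hB
  have hBm : ∀ k, MeasurableSet (B k) := MeasurableSet.disjointed hDm
  have hBD : ∀ k, B k ⊆ D k := disjointed_subset D
  have hBA : ∀ k, B k ⊆ A := fun k => (hBD k).trans inter_subset_left
  have hAB : A ⊆ ⋃ k, B k := by
    rw [hB, iUnion_disjointed]
    intro x hx
    have := hcov hx
    simp only [biUnion_range, mem_iUnion] at this ⊢
    obtain ⟨k, hk⟩ := this
    exact ⟨k, hx, hk⟩
  have hdis : Pairwise (Function.onFun Disjoint B) := disjoint_disjointed D
  have hlip : ∀ k, ∀ x ∈ B k, ∀ y ∈ B k, dist x y ≤ C * dist (p x) (p y) := by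
    intro k x hx y hy
    exact hWl (u k) (htA ⟨k, rfl⟩) x ⟨interior_subset (hBD k hx).2, hBA k hx⟩ y
      ⟨interior_subset (hBD k hy).2, hBA k hy⟩
  have hinj : ∀ k, InjOn p (B k) := by
    intro k x hx y hy hxy
    have := hlip k x hx y hy
    rw [hxy, dist_self, mul_zero] at this
    exact dist_le_zero.1 this
  have hpm : ∀ k, MeasurableSet (p '' B k) := fun k =>
    (hBm k).image_of_continuousOn_injOn hp.continuousOn (hinj k)
  have hmeas : ∀ k, μH[(m : ℝ)] (B k) ≤ (C : ENNReal) ^ (m : ℝ) * volume (p '' B k) := by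
    intro k
    have hl : LipschitzOnWith C (Function.invFunOn p (B k)) (p '' B k) := by
      refine LipschitzOnWith.of_dist_le_mul ?_
      rintro _ ⟨x, hx, rfl⟩ _ ⟨y, hy, rfl⟩
      rw [(hinj k).leftInvOn_invFunOn hx, (hinj k).leftInvOn_invFunOn hy]
      exact hlip k x hx y hy
    have := hl.hausdorffMeasure_image_le (d := (m : ℝ)) (by positivity)
    rw [(hinj k).invFunOn_image Subset.rfl] at this
    have hv : (μH[(m : ℝ)] : Measure (Fin m → ℝ)) = volume := by
      have := hausdorffMeasure_pi_real (ι := Fin m)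
      rwa [Fintype.card_fin] at this
    rwa [hv] at this
  have hsum : ∀ w, ∑' k, (p '' B k).indicator (1 : (Fin m → ℝ) → ENNReal) w
      ≤ (p '' A).indicator (fun _ => (N : ENNReal)) w := by
    intro w
    by_cases hw : w ∈ p '' A
    · rw [indicator_of_mem hw]
      refine ENNReal.summable.tsum_le_of_sum_le ?_
      intro s
      simp only [indicator_apply, Pi.one_apply]
      rw [Finset.sum_boole]
      norm_cast
      have hch : ∀ k ∈ s.filter (fun k => w ∈ p '' B k), ∃ x ∈ B k, p x = w := by
        intro k hk
        exact (Finset.mem_filter.1 hk).2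
      choose! x hxB hxw using hch
      rw [← Finset.card_image_of_injOn (f := x)]
      · refine hN _ ?_ ?_
        · intro y hy
          rw [Finset.mem_coe, Finset.mem_image] at hy
          obtain ⟨k, hk, rfl⟩ := hy
          exact hBA k (hxB k hk)
        · intro y hy z hz
          rw [Finset.mem_image] at hy hz
          obtain ⟨k, hk, rfl⟩ := hy
          obtain ⟨l, hl, rfl⟩ := hz
          rw [hxw k hk, hxw l hl]
      · intro k hk l hl hkl
        by_contra hne
        exact Set.disjoint_left.1 (hdis hne) (hxB k hk) (hkl ▸ hxB l hl)
    · rw [indicator_of_notMem hw]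
      have : ∀ k, (p '' B k).indicator (1 : (Fin m → ℝ) → ENNReal) w = 0 := fun k =>
        indicator_of_notMem (fun h => hw (image_mono (hBA k) h)) _
      simp [this]
  calc μH[(m : ℝ)] A ≤ μH[(m : ℝ)] (⋃ k, B k) := measure_mono hAB
    _ ≤ ∑' k, μH[(m : ℝ)] (B k) := measure_iUnion_le _
    _ ≤ ∑' k, (C : ENNReal) ^ (m : ℝ) * volume (p '' B k) := ENNReal.tsum_le_tsum hmeas
    _ = (C : ENNReal) ^ (m : ℝ) * ∑' k, volume (p '' B k) := ENNReal.tsum_mul_left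
    _ = (C : ENNReal) ^ (m : ℝ) * ∫⁻ w, ∑' k, (p '' B k).indicator 1 w := by
      rw [lintegral_tsum]
      · congr 2
        ext k
        rw [lintegral_indicator_one (hpm k)]
      · exact fun k => (measurable_one.indicator (hpm k)).aemeasurable
    _ ≤ (C : ENNReal) ^ (m : ℝ) * ∫⁻ w, (p '' A).indicator (fun _ => (N : ENNReal)) w := by
      gcongr
      exact hsum _
    _ ≤ (C : ENNReal) ^ (m : ℝ) * (N * volume (p '' A)) := by
      gcongr
      exact lintegral_indicator_const_le _ _
    _ < ⊤ := by
      refine ENNReal.mul_lt_top (ENNReal.rpow_lt_top_of_nonneg (by positivity) (by simp)) ?_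
      exact ENNReal.mul_lt_top (by simp) hbd.measure_lt_top

theorem exists_proj {E : Type*} [NormedAddCommGroup E] [InnerProductSpace ℂ E]
    [FiniteDimensional ℂ E] (m : ℕ) (hm : Module.finrank ℂ E = m + 1) (v : E) (hv : v ≠ 0) :
    ∃ (p : E →L[ℝ] (Fin (2 * m) → ℝ)) (B : ℝ), 0 ≤ B ∧
      ∀ u, ∃ t : ℂ, ‖u - t • v‖ ≤ B * ‖p u‖ := by
  have _ : Fact (Module.finrank ℂ E = m + 1) := ⟨hm⟩
  have h1 : Module.finrank ℂ (ℂ ∙ v)ᗮ = m := Submodule.finrank_orthogonal_span_singleton hv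
  have h2 : Module.finrank ℝ (ℂ ∙ v)ᗮ = Module.finrank ℝ (Fin (2 * m) → ℝ) := by
    rw [finrank_real_of_complex, h1, Module.finrank_fin_fun]
  have _ : FiniteDimensional ℝ (ℂ ∙ v)ᗮ := FiniteDimensional.complexToReal _
  let e : (ℂ ∙ v)ᗮ ≃L[ℝ] (Fin (2 * m) → ℝ) := ContinuousLinearEquiv.ofFinrankEq h2
  obtain ⟨B, hB, hBe⟩ := (e.symm : (Fin (2 * m) → ℝ) →L[ℝ] (ℂ ∙ v)ᗮ).bound
  refine ⟨(e : (ℂ ∙ v)ᗮ →L[ℝ] (Fin (2 * m) → ℝ)).comp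
    ((ℂ ∙ v)ᗮ.orthogonalProjectionOnto.restrictScalars ℝ),
    B, hB.le, fun u => ?_⟩
  obtain ⟨t, ht⟩ := Submodule.mem_span_singleton.1 ((ℂ ∙ v).orthogonalProjectionOnto u).2
  refine ⟨t, ?_⟩
  have h3 : u - t • v = (ℂ ∙ v)ᗮ.orthogonalProjectionOnto u := by
    rw [ht]
    exact (Submodule.starProjection_orthogonal_val u).symm
  rw [h3]
  have := hBe (e ((ℂ ∙ v)ᗮ.orthogonalProjectionOnto u))
  simpa using this

theorem line_frequently {f : E → ℂ} {U : Set E} (hU : IsOpen U) (hf : DifferentiableOn ℂ f U)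
    {z₀ : E} {ρ : ℝ} (hball : ball z₀ ρ ⊆ U) {w : E} (hw : w ∈ ball z₀ ρ) (hfw : f w ≠ 0) :
    ∃ᶠ t in 𝓝 (0 : ℂ), f (z₀ + t • (w - z₀)) ≠ 0 := by
  intro hcon
  have hcon' : (fun t : ℂ => f (z₀ + t • (w - z₀))) =ᶠ[𝓝 0] 0 :=
    hcon.mono fun t ht => not_not.1 ht
  have hρ : 0 < ρ := dist_nonneg.trans_lt hw
  have hw' : ‖w - z₀‖ < ρ := by rwa [mem_ball, dist_eq_norm] at hw
  have hsub : closedBall (0 : ℂ) 1 ⊆ {t : ℂ | z₀ + t • (w - z₀) ∈ U} := by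
    intro t ht
    refine hball ?_
    rw [mem_ball, dist_eq_norm, add_sub_cancel_left, norm_smul]
    have : ‖t‖ ≤ 1 := by simpa using ht
    nlinarith [norm_nonneg (w - z₀), norm_nonneg t]
  have han : AnalyticOnNhd ℂ (fun t : ℂ => f (z₀ + t • (w - z₀))) (closedBall 0 1) :=
    ((diff_line hU hf z₀ (w - z₀)).analyticOnNhd (hU.preimage (by fun_prop))).mono hsub
  have := han.eqOn_zero_of_preconnected_of_eventuallyEq_zero
    (convex_closedBall (0 : ℂ) 1).isPreconnected (mem_closedBall_self zero_le_one) hcon'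
    (show (1 : ℂ) ∈ closedBall 0 1 by simp)
  simp at this
  exact hfw this

theorem finite_dir {E : Type*} [NormedAddCommGroup E] [InnerProductSpace ℂ E]
    [FiniteDimensional ℂ E] [MeasurableSpace E] [BorelSpace E]
    (m : ℕ) (hm : Module.finrank ℂ E = m + 1)
    {f : E → ℂ} {U : Set E} (hU : IsOpen U) (hf : DifferentiableOn ℂ f U) {z₀ : E} (hz₀ : z₀ ∈ U)
    (v : E) (hv : v ≠ 0) (K : ℝ) (hK : 0 < K)
    (hfreq : ∃ᶠ t in 𝓝 (0 : ℂ), f (z₀ + t • v) ≠ 0) :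
    ∃ V ∈ 𝓝 z₀, μH[((2 * m : ℕ) : ℝ)] {z ∈ V | f z = 0 ∧ fderiv ℂ f z ≠ 0 ∧
      ‖fderiv ℂ f z‖ ≤ K * ‖fderiv ℂ f z v‖} < ⊤ := by
  classical
  have hv' : 0 < ‖v‖ := norm_pos_iff.2 hv
  obtain ⟨ρ, hρ, hball⟩ : ∃ ρ > 0, ∀ z ∈ ball z₀ ρ, z ∈ U ∧ dist (f z) (f z₀) < 1 := by
    have h1 := (hf.differentiableAt (hU.mem_nhds hz₀)).continuousAt
    have h2 : ∀ᶠ z in 𝓝 z₀, z ∈ U ∧ dist (f z) (f z₀) < 1 :=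
      Filter.Eventually.and (hU.mem_nhds hz₀) (h1.eventually (ball_mem_nhds _ one_pos))
    exact Metric.eventually_nhds_iff_ball.1 h2
  set M : ℝ := ‖f z₀‖ + 1 with hM
  have hfM : ∀ z ∈ ball z₀ ρ, ‖f z‖ ≤ M := by
    intro z hz
    have h1 := (hball z hz).2
    rw [dist_eq_norm] at h1
    have := norm_sub_norm_le (f z) (f z₀)
    linarith
  set R : ℝ := ρ / (4 * ‖v‖) with hRdef
  have hR : 0 < R := by positivity
  have hRv : R * ‖v‖ = ρ / 4 := by rw [hRdef]; field_simp
  obtain ⟨t₀, ht₀, ht₀R⟩ := (hfreq.and_eventually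
    (ball_mem_nhds (0 : ℂ) (show 0 < R / 6 by positivity))).exists
  rw [dist_zero_right] at ht₀R
  have ht₀v : ‖t₀ • v‖ ≤ ρ / 24 := by
    rw [norm_smul]
    nlinarith
  have ht₀U : z₀ + t₀ • v ∈ ball z₀ ρ := by
    rw [mem_ball, dist_eq_norm, add_sub_cancel_left]
    linarith
  set c : ℝ := ‖f (z₀ + t₀ • v)‖ / 2 with hc
  have hc0 : 0 < c := by have := norm_pos_iff.2 ht₀; positivity
  have hlow : ∀ᶠ x in 𝓝 z₀, c < ‖f (x + t₀ • v)‖ := by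
    have h1 : ContinuousAt f (z₀ + t₀ • v) :=
      (hf.differentiableAt (hU.mem_nhds (hball _ ht₀U).1)).continuousAt
    have h2 : ContinuousAt (fun x => ‖f (x + t₀ • v)‖) z₀ :=
      (ContinuousAt.comp (f := fun x => x + t₀ • v) h1 (by fun_prop)).norm
    refine h2.eventually (lt_mem_nhds ?_)
    rw [hc]
    linarith
  obtain ⟨η₁, hη₁, hlow⟩ := Metric.eventually_nhds_iff_ball.1 hlow
  set η := min η₁ (ρ / 100) with hη
  have hη0 : 0 < η := by positivity
  have hη1 : η ≤ η₁ := min_le_left _ _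
  have hη2 : η ≤ ρ / 100 := min_le_right _ _
  obtain ⟨N, hN⟩ : ∃ N : ℕ, M / c < 2 ^ N := pow_unbounded_of_one_lt _ one_lt_two
  obtain ⟨p, B, hB, hp⟩ := exists_proj m hm v hv
  have hηU : ball z₀ η ⊆ U := fun z hz => (hball z (ball_subset_ball (by linarith) hz)).1
  refine ⟨ball z₀ η, ball_mem_nhds _ hη0, ?_⟩
  set A := {z ∈ ball z₀ η | f z = 0 ∧ fderiv ℂ f z ≠ 0 ∧
      ‖fderiv ℂ f z‖ ≤ K * ‖fderiv ℂ f z v‖} with hA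
  have _ : ProperSpace E := FiniteDimensional.proper ℂ E
  refine hausdorff_finite_of_cover (2 * m) p p.continuous A ?_
    (Real.toNNReal (2 * B * (1 + K * ‖v‖))) ?_ N ?_ ?_
  · -- measurability
    have h1 : MeasurableSet {z ∈ ball z₀ η | f z = 0} := by
      have h2 : {z ∈ ball z₀ η | f z = 0} = ball z₀ η \ (ball z₀ η ∩ f ⁻¹' {0}ᶜ) := by
        ext z; simp only [mem_ofPred_eq, Set.mem_sdiff, mem_inter_iff, mem_preimage, mem_compl_iff,
          mem_singleton_iff]; tauto
      rw [h2]
      refine isOpen_ball.measurableSet.diff (IsOpen.measurableSet ?_)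
      exact (hf.continuousOn.mono hηU).isOpen_inter_preimage isOpen_ball isOpen_compl_singleton
    have h3 : MeasurableSet {z | fderiv ℂ f z ≠ 0} :=
      (measurable_fderiv ℂ f) (measurableSet_singleton 0).compl
    have h4 : MeasurableSet {z | ‖fderiv ℂ f z‖ ≤ K * ‖fderiv ℂ f z v‖} :=
      measurableSet_le (measurable_fderiv ℂ f).norm
        ((measurable_fderiv_apply_const ℂ f v).norm.const_mul K)
    have h5 : A = {z ∈ ball z₀ η | f z = 0} ∩ ({z | fderiv ℂ f z ≠ 0} ∩
        {z | ‖fderiv ℂ f z‖ ≤ K * ‖fderiv ℂ f z v‖}) := by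
      ext z; simp only [hA, mem_ofPred_eq, mem_inter_iff]; tauto
    rw [h5]
    exact h1.inter (h3.inter h4)
  · -- local bound
    rintro z ⟨hz, -, hz2, hz3⟩
    set L := fderiv ℂ f z with hL
    have hL0 : 0 < ‖L‖ := norm_pos_iff.2 hz2
    have hstr := strict_of_differentiableOn hU hf (hηU hz)
    set ε : ℝ := ‖L‖ / (2 * K * ‖v‖) with hε
    have hε0 : 0 < ε := by positivity
    have h1 := hstr.isLittleO.def hε0
    rw [nhds_prod_eq, Filter.eventually_prod_self_iff'] at h1
    obtain ⟨W, hW, hWl⟩ := h1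
    refine ⟨W, hW, ?_⟩
    rintro x ⟨hxW, hxA⟩ y ⟨hyW, hyA⟩
    have h2 := hWl x hxW y hyW
    simp only [hxA.2.1, hyA.2.1, sub_self, zero_sub, norm_neg] at h2
    rw [← hL] at h2
    obtain ⟨t, ht⟩ := hp (x - y)
    rw [Real.coe_toNNReal _ (by positivity), dist_eq_norm, dist_eq_norm, ← map_sub]
    generalize x - y = w at *
    have h3 : ‖t‖ * ‖L v‖ ≤ ε * ‖w‖ + ‖L‖ * (B * ‖p w‖) := by
      rw [← norm_mul, ← smul_eq_mul, ← map_smul]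
      have : L (t • v) = L w - L (w - t • v) := by rw [← map_sub]; simp
      rw [this]
      refine (norm_sub_le _ _).trans (add_le_add h2 ?_)
      exact (L.le_opNorm _).trans (by gcongr)
    have h4 : ‖t‖ * ‖L‖ ≤ K * (ε * ‖w‖ + ‖L‖ * (B * ‖p w‖)) := by
      calc ‖t‖ * ‖L‖ ≤ ‖t‖ * (K * ‖L v‖) := by gcongr
        _ = K * (‖t‖ * ‖L v‖) := by ring
        _ ≤ _ := by gcongr
    have h5 : ‖t‖ * ‖v‖ ≤ ‖w‖ / 2 + K * ‖v‖ * (B * ‖p w‖) := by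
      have h6 : (‖t‖ * ‖v‖) * ‖L‖ ≤ (‖w‖ / 2 + K * ‖v‖ * (B * ‖p w‖)) * ‖L‖ := by
        calc (‖t‖ * ‖v‖) * ‖L‖ = ‖v‖ * (‖t‖ * ‖L‖) := by ring
          _ ≤ ‖v‖ * (K * (ε * ‖w‖ + ‖L‖ * (B * ‖p w‖))) := by gcongr
          _ = _ := by rw [hε]; field_simp
      exact le_of_mul_le_mul_right h6 hL0
    have h7 : ‖w‖ ≤ ‖w - t • v‖ + ‖t‖ * ‖v‖ := by
      rw [← norm_smul]
      simpa using norm_add_le (w - t • v) (t • v)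
    nlinarith
  · -- fibre bound
    intro S hSA hSp
    rcases S.eq_empty_or_nonempty with rfl | ⟨x₀, hx₀⟩
    · simp
    have hx₀A := hSA hx₀
    have hch : ∀ x ∈ S, ∃ t : ℂ, x = x₀ + t • v := by
      intro x hx
      obtain ⟨t, ht⟩ := hp (x - x₀)
      rw [map_sub, hSp x hx x₀ hx₀, sub_self, norm_zero, mul_zero] at ht
      have := sub_eq_zero.1 (norm_le_zero_iff.1 ht)
      exact ⟨t, by rw [← this]; abel⟩
    choose! τ hτ using hch
    have hinj : InjOn (fun x => τ x - t₀) S := by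
      intro x hx y hy hxy
      have : τ x = τ y := by simpa using hxy
      rw [hτ x hx, hτ y hy, this]
    have hx₀n : ‖x₀ - z₀‖ < η := by
      have := hx₀A.1
      rwa [mem_ball, dist_eq_norm] at this
    have hin : ∀ t : ℂ, ‖t‖ ≤ R → x₀ + (t₀ + t) • v ∈ ball z₀ ρ := by
      intro t ht
      rw [mem_ball, dist_eq_norm]
      have h1 : ‖t • v‖ ≤ ρ / 4 := by
        rw [norm_smul, ← hRv]; gcongr
      calc ‖x₀ + (t₀ + t) • v - z₀‖ = ‖(x₀ - z₀) + (t₀ • v + t • v)‖ := by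
            congr 1; rw [add_smul]; abel
        _ ≤ ‖x₀ - z₀‖ + (‖t₀ • v‖ + ‖t • v‖) :=
          (norm_add_le _ _).trans (by gcongr; exact norm_add_le _ _)
        _ < ρ := by linarith
    have hmain := zeros_bound R hR (S.image fun x => τ x - t₀)
      (fun t => f (x₀ + (t₀ + t) • v)) M ?_ ?_ ?_ ?_
    · rw [Finset.card_image_of_injOn hinj] at hmain
      by_contra hcon
      have h1 : (2:ℝ) ^ N ≤ 2 ^ S.card := pow_le_pow_right₀ one_le_two (by omega)
      have h2 : c < ‖f (x₀ + (t₀ + 0) • v)‖ := by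
        rw [add_zero]
        exact hlow x₀ (ball_subset_ball hη1 hx₀A.1)
      have h3 : M < c * 2 ^ N := by rwa [div_lt_iff₀' hc0] at hN
      have h4 : c * 2 ^ N ≤ ‖f (x₀ + (t₀ + 0) • v)‖ * 2 ^ S.card := by gcongr
      linarith
    · refine DifferentiableOn.diffContOnCl ?_
      rw [closure_ball _ hR.ne']
      intro t ht
      refine DifferentiableAt.differentiableWithinAt ?_
      refine DifferentiableAt.comp t (hf.differentiableAt (hU.mem_nhds (hball _ (hin t ?_)).1))
        (by fun_prop)
      simpa using ht
    · intro t ht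
      exact hfM _ (hin t (by simpa using (mem_sphere_zero_iff_norm.1 ht).le))
    · intro a ha
      obtain ⟨x, hx, rfl⟩ := Finset.mem_image.1 ha
      have h1 : ‖τ x‖ * ‖v‖ < 2 * η := by
        rw [← norm_smul]
        have h2 : τ x • v = (x - z₀) - (x₀ - z₀) := by
          conv_rhs => rw [hτ x hx]
          abel
        have h3 : ‖x - z₀‖ < η := by
          have := (hSA hx).1
          rwa [mem_ball, dist_eq_norm] at this
        rw [h2]
        exact (norm_sub_le _ _).trans_lt (by linarith)
      have h4 : ‖τ x‖ < R / 6 := by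
        refine lt_of_mul_lt_mul_right (a := ‖v‖) ?_ hv'.le
        nlinarith
      exact (norm_sub_le _ _).trans_lt (by linarith)
    · intro a ha
      obtain ⟨x, hx, rfl⟩ := Finset.mem_image.1 ha
      show f (x₀ + (t₀ + (τ x - t₀)) • v) = 0
      rw [add_sub_cancel, ← hτ x hx]
      exact (hSA hx).2.1
  · have h1 : Bornology.IsBounded (p '' ball z₀ η) :=
      p.lipschitz.isBounded_image isBounded_ball
    exact h1.subset (image_mono fun z hz => hz.1)

theorem finite_reg {E : Type*} [NormedAddCommGroup E] [InnerProductSpace ℂ E]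
    [FiniteDimensional ℂ E] [MeasurableSpace E] [BorelSpace E]
    (m : ℕ) (hm : Module.finrank ℂ E = m + 1)
    {f : E → ℂ} {U : Set E} (hU : IsOpen U) (hf : DifferentiableOn ℂ f U) {z₀ : E} (hz₀ : z₀ ∈ U)
    (hf0 : f z₀ = 0) (hnv : ∃ᶠ z in 𝓝 z₀, f z ≠ 0) :
    ∃ V ∈ 𝓝 z₀, μH[((2 * m : ℕ) : ℝ)] {z ∈ V | f z = 0 ∧ fderiv ℂ f z ≠ 0} < ⊤ := by
  classical
  obtain ⟨ρ, hρ, hball⟩ := Metric.isOpen_iff.1 hU z₀ hz₀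
  obtain ⟨z, hz, hzρ⟩ := (hnv.and_eventually (ball_mem_nhds z₀ hρ)).exists
  have hzB : z ∈ ball z₀ ρ := hzρ
  -- nearby points
  obtain ⟨s, hs, hsz⟩ : ∃ s > 0, ∀ w ∈ ball z s, w ∈ ball z₀ ρ ∧ f w ≠ 0 := by
    have h1 := (hf.differentiableAt (hU.mem_nhds (hball hzB))).continuousAt
    have h2 : ∀ᶠ w in 𝓝 z, w ∈ ball z₀ ρ ∧ f w ≠ 0 :=
      Filter.Eventually.and (isOpen_ball.mem_nhds hzB) (h1.eventually_ne hz)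
    exact Metric.eventually_nhds_iff_ball.1 h2
  have hgood : ∀ w ∈ ball z s, (w - z₀ ≠ 0) ∧ ∃ᶠ t in 𝓝 (0 : ℂ), f (z₀ + t • (w - z₀)) ≠ 0 :=
    fun w hw => ⟨fun h => (hsz w hw).2 (sub_eq_zero.1 h ▸ hf0),
      line_frequently hU hf hball (hsz w hw).1 (hsz w hw).2⟩
  let b := stdOrthonormalBasis ℂ E
  let d := Module.finrank ℂ E
  let wt : Option (Fin d) → E := fun o => o.elim z (fun i => z + ((s / 2 : ℝ) : ℂ) • b i)
  have hwt : ∀ o, wt o ∈ ball z s := by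
    intro o
    cases o with
    | none => exact mem_ball_self hs
    | some i =>
      show z + ((s / 2 : ℝ) : ℂ) • b i ∈ ball z s
      rw [mem_ball, dist_eq_norm, add_sub_cancel_left, norm_smul, b.norm_eq_one, mul_one,
        Complex.norm_real, Real.norm_of_nonneg (by positivity)]
      linarith
  set K : ℝ := 4 * (d + 1) / s with hK
  have hK0 : 0 < K := by positivity
  have hdir : ∀ L : E →L[ℂ] ℂ, ∃ o, ‖L‖ ≤ K * ‖L (wt o - z₀)‖ := by
    intro L
    by_contra! hcon
    have hLb : ∀ i, ‖L (b i)‖ * d ≤ ‖L‖ * (d / (d + 1)) := by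
      intro i
      have h1 := hcon none
      have h2 := hcon (some i)
      have h3 : L (((s / 2 : ℝ) : ℂ) • b i) = L (wt (some i) - z₀) - L (wt none - z₀) := by
        rw [← map_sub]; congr 1
        show _ = (z + ((s / 2 : ℝ) : ℂ) • b i - z₀) - (z - z₀)
        abel
      have h4 : s / 2 * ‖L (b i)‖ ≤ ‖L (wt (some i) - z₀)‖ + ‖L (wt none - z₀)‖ := by
        have := norm_sub_le (L (wt (some i) - z₀)) (L (wt none - z₀))
        rw [← h3, map_smul, norm_smul, Complex.norm_real, Real.norm_of_nonneg (by positivity)] at this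
        exact this
      have h5 : K * (s / 2 * ‖L (b i)‖) ≤ 2 * ‖L‖ := by
        calc _ ≤ K * (‖L (wt (some i) - z₀)‖ + ‖L (wt none - z₀)‖) := by gcongr
          _ ≤ _ := by linarith
      have h6 : K * (s / 2 * ‖L (b i)‖) = 2 * ((d + 1) * ‖L (b i)‖) := by
        rw [hK]; field_simp; ring
      have h7 : ‖L (b i)‖ ≤ ‖L‖ / (d + 1) := by
        rw [le_div_iff₀ (by positivity)]; linarith
      calc ‖L (b i)‖ * d ≤ ‖L‖ / (d + 1) * d := by gcongr
        _ = _ := by ring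
    have hLpos : 0 < ‖L‖ := lt_of_le_of_lt (by positivity) (hcon none)
    have hd : 0 < (d : ℝ) := by
      have : 0 < d := by show 0 < Module.finrank ℂ E; omega
      exact_mod_cast this
    have hle : ‖L‖ ≤ ‖L‖ * (d / (d + 1)) := by
      refine L.opNorm_le_bound (by positivity) fun u => ?_
      have h1 : L u = ∑ i, b.repr u i • L (b i) := by
        conv_lhs => rw [← b.sum_repr u]
        simp
      rw [h1]
      refine (norm_sum_le _ _).trans ?_
      have h2 : ∀ i ∈ Finset.univ, ‖b.repr u i • L (b i)‖ ≤ ‖L‖ / (d + 1) * ‖u‖ := by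
        intro i _
        have h3 : ‖b.repr u i‖ ≤ ‖u‖ := by
          have := PiLp.norm_apply_le (b.repr u) i
          rwa [b.repr.norm_map] at this
        have h4 : ‖L (b i)‖ ≤ ‖L‖ / (d + 1) := by
          refine le_of_mul_le_mul_right ((hLb i).trans_eq ?_) hd
          ring
        rw [norm_smul, mul_comm]
        gcongr
      refine (Finset.sum_le_card_nsmul _ _ _ h2).trans_eq ?_
      rw [Finset.card_univ, Fintype.card_fin, nsmul_eq_mul]
      show (d : ℝ) * _ = _
      ring
    have : (d : ℝ) / (d + 1) < 1 := by rw [div_lt_one (by positivity)]; linarith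
    nlinarith
  have hfin := fun o => finite_dir m hm hU hf hz₀ (wt o - z₀) (hgood _ (hwt o)).1 K hK0
    (hgood _ (hwt o)).2
  choose V hV hVm using hfin
  refine ⟨⋂ o, V o, Filter.iInter_mem.2 hV, ?_⟩
  refine lt_of_le_of_lt (measure_mono (t := ⋃ o, {z ∈ V o | f z = 0 ∧ fderiv ℂ f z ≠ 0 ∧
      ‖fderiv ℂ f z‖ ≤ K * ‖fderiv ℂ f z (wt o - z₀)‖}) ?_) ?_
  · rintro x ⟨hx, hx1, hx2⟩
    obtain ⟨o, ho⟩ := hdir (fderiv ℂ f x)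
    exact mem_iUnion.2 ⟨o, mem_iInter.1 hx o, hx1, hx2, ho⟩
  · refine (measure_iUnion_le _).trans_lt ?_
    rw [tsum_fintype]
    exact ENNReal.sum_lt_top.2 fun o _ => hVm o

theorem finite_zero_of_order {E : Type*} [NormedAddCommGroup E] [InnerProductSpace ℂ E]
    [FiniteDimensional ℂ E] [MeasurableSpace E] [BorelSpace E]
    (m : ℕ) (hm : Module.finrank ℂ E = m + 1) {U : Set E} (hU : IsOpen U) {z₀ : E} (hz₀ : z₀ ∈ U)
    (v : E) (k : ℕ) : ∀ f : E → ℂ, DifferentiableOn ℂ f U →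
    analyticOrderAt (fun t : ℂ => f (z₀ + t • v)) 0 = k →
    ∃ V ∈ 𝓝 z₀, μH[((2 * m : ℕ) : ℝ)] {z ∈ V | f z = 0} < ⊤ := by
  have hpre : {t : ℂ | z₀ + t • v ∈ U} ∈ 𝓝 (0 : ℂ) :=
    (hU.preimage (by fun_prop : Continuous fun t : ℂ => z₀ + t • v)).mem_nhds (by simpa using hz₀)
  have han : ∀ f : E → ℂ, DifferentiableOn ℂ f U →
      AnalyticAt ℂ (fun t : ℂ => f (z₀ + t • v)) 0 := fun f hf =>
    (diff_line hU hf z₀ v).analyticAt hpre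
  have hne : ∀ f : E → ℂ, DifferentiableOn ℂ f U → f z₀ ≠ 0 →
      ∃ V ∈ 𝓝 z₀, μH[((2 * m : ℕ) : ℝ)] {z ∈ V | f z = 0} < ⊤ := by
    intro f hf h0
    refine ⟨{z | f z ≠ 0}, (hf.differentiableAt (hU.mem_nhds hz₀)).continuousAt.eventually_ne h0, ?_⟩
    have : {z | z ∈ {z | f z ≠ 0} ∧ f z = 0} = ∅ := by
      ext z; simp
    rw [this]; simp
  induction k with
  | zero =>
    intro f hf hk
    refine hne f hf ?_
    have := ((han f hf).analyticOrderAt_eq_zero).1 (by simpa using hk)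
    simpa using this
  | succ k ih =>
    intro f hf hk
    by_cases hf0 : f z₀ = 0
    swap
    · exact hne f hf hf0
    have hfreq : ∃ᶠ z in 𝓝 z₀, f z ≠ 0 := by
      intro hcon
      have : analyticOrderAt (fun t : ℂ => f (z₀ + t • v)) 0 = ⊤ := by
        rw [analyticOrderAt_eq_top]
        have hc : Tendsto (fun t : ℂ => z₀ + t • v) (𝓝 0) (𝓝 z₀) := by
          have : ContinuousAt (fun t : ℂ => z₀ + t • v) 0 := by fun_prop
          simpa [ContinuousAt] using this
        filter_upwards [hc.eventually hcon] with t ht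
        simpa using ht
      rw [this] at hk
      exact ENat.top_ne_natCast _ hk
    obtain ⟨V₁, hV₁, hm₁⟩ := finite_reg m hm hU hf hz₀ hf0 hfreq
    obtain ⟨V₂, hV₂, hm₂⟩ := ih (fun z => fderiv ℂ f z v) (differentiableOn_fderiv_apply hU hf v) (by
      have h1 : (fun t : ℂ => fderiv ℂ f (z₀ + t • v) v) =ᶠ[𝓝 0]
          deriv (fun t : ℂ => f (z₀ + t • v)) := by
        filter_upwards [hpre] with t ht
        exact (deriv_line z₀ v t (hf.differentiableAt (hU.mem_nhds ht))).symm
      rw [analyticOrderAt_congr h1]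
      have h2 := (han f hf).analyticOrderAt_deriv_add_one
      simp only [zero_smul, add_zero, hf0, sub_zero] at h2
      rw [hk] at h2
      push_cast at h2
      exact (ENat.add_left_injective_of_ne_top ENat.one_ne_top) h2)
    refine ⟨V₁ ∩ V₂, Filter.inter_mem hV₁ hV₂, ?_⟩
    refine (measure_mono ?_).trans_lt ((measure_union_le _ _).trans_lt (ENNReal.add_lt_top.2 ⟨hm₁, hm₂⟩))
    rintro z ⟨⟨h1, h2⟩, h3⟩
    by_cases h : fderiv ℂ f z = 0
    · exact Or.inr ⟨h2, by simp [h]⟩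
    · exact Or.inl ⟨h1, h3, h⟩

theorem finite_zero {E : Type*} [NormedAddCommGroup E] [InnerProductSpace ℂ E]
    [FiniteDimensional ℂ E] [MeasurableSpace E] [BorelSpace E]
    (m : ℕ) (hm : Module.finrank ℂ E = m + 1)
    {f : E → ℂ} {U : Set E} (hU : IsOpen U) (hf : DifferentiableOn ℂ f U) {z₀ : E} (hz₀ : z₀ ∈ U)
    (hnv : ∀ V ∈ 𝓝 z₀, ∃ z ∈ V, f z ≠ 0) :
    ∃ V ∈ 𝓝 z₀, μH[((2 * m : ℕ) : ℝ)] {z ∈ V | f z = 0} < ⊤ := by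
  obtain ⟨ρ, hρ, hball⟩ := Metric.isOpen_iff.1 hU z₀ hz₀
  obtain ⟨z, hzB, hz⟩ := hnv _ (ball_mem_nhds z₀ hρ)
  have h1 := line_frequently hU hf hball hzB hz
  have h2 : analyticOrderAt (fun t : ℂ => f (z₀ + t • (z - z₀))) 0 ≠ ⊤ := by
    rw [Ne, analyticOrderAt_eq_top]
    exact fun h => h1 (h.mono fun t ht => not_not.2 ht)
  obtain ⟨k, hk⟩ := ENat.ne_top_iff_exists.1 h2
  exact finite_zero_of_order m hm hU hz₀ (z - z₀) k f hf hk.symm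

end Aux

/-- Near any point `z₀` at which a holomorphic function `f` on an open set `U ⊆ ℂⁿ`
does not vanish identically, the zero hypersurface `Z_f = f⁻¹(0)` has finite
`(2n−2)`-dimensional Hausdorff measure in some open neighborhood `V ⊆ U` of `z₀`;
in particular `Z_f` has locally finite `(2n−2)`-dimensional volume near each of its
points, including singular points. -/
theorem zero_set_locally_finite_hausdorff_measure
    (n : ℕ) (hn : 1 ≤ n) (U : Set (EuclideanSpace ℂ (Fin n))) (hU : IsOpen U)
    (f : EuclideanSpace ℂ (Fin n) → ℂ) (hf : DifferentiableOn ℂ f U)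
    (z₀ : EuclideanSpace ℂ (Fin n)) (hz₀ : z₀ ∈ U)
    (hnv : ∀ V ∈ nhds z₀, ∃ z ∈ V, f z ≠ 0) :
    ∃ V : Set (EuclideanSpace ℂ (Fin n)), IsOpen V ∧ z₀ ∈ V ∧ V ⊆ U ∧
      μH[2 * (n : ℝ) - 2] {z ∈ V | f z = 0} < ⊤ := by
  obtain ⟨m, rfl⟩ : ∃ m, n = m + 1 := ⟨n - 1, by omega⟩
  have hm : Module.finrank ℂ (EuclideanSpace ℂ (Fin (m + 1))) = m + 1 := finrank_euclideanSpace_fin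
  obtain ⟨V, hV, hVm⟩ := finite_zero m hm hU hf hz₀ hnv
  refine ⟨interior V ∩ U, isOpen_interior.inter hU, ⟨mem_interior_iff_mem_nhds.2 hV, hz₀⟩,
    Set.inter_subset_right, ?_⟩
  have hd : 2 * ((m + 1 : ℕ) : ℝ) - 2 = ((2 * m : ℕ) : ℝ) := by push_cast; ring
  rw [hd]
  refine (measure_mono ?_).trans_lt hVm
  rintro z ⟨⟨h1, -⟩, h2⟩
  exact ⟨interior_subset h1, h2⟩
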